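/- Let u ∈ ℝ⁴ be a future timelike vector, p₀ ∈ ℝ⁴, and ℓ = {p₀ + s u : s ∈ ℝ}. Let G_M be the group of affine bijections f of ℝ⁴ of the form f(x) = B x + b with B a Lorentz transformation (not necessarily proper or orthochronous, so in particular time inversion is allowed) and b ∈ ℝ⁴, such that f(ℓ) = ℓ. If ∼ is a G_M-invariant equivalence relation on ℝ⁴ such that every equivalence class meets ℓ in exactly one point, then ∼ equals the standard simultaneity relation R_u: x ∼ y ⟺ g_c(x − y, u) = 0. -/

import Mathlib

noncomputable section

/-- Spacetime `ℝ⁴`, identified with `ℝ³ × ℝ`. -/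
abbrev V4 : Type := (Fin 3 → ℝ) × ℝ

/-- The Minkowski form `g_c(x, y) = x̄ ⬝ ȳ - c² x⁴ y⁴`. -/
def mink (c : ℝ) (x y : V4) : ℝ := (∑ i, x.1 i * y.1 i) - c ^ 2 * x.2 * y.2

/-- A vector is future timelike if `g_c(u, u) < 0` and `u⁴ > 0`. -/
def FutureTimelike (c : ℝ) (u : V4) : Prop := mink c u u < 0 ∧ 0 < u.2

/-- A linear map is a Lorentz transformation if it preserves the Minkowski form. -/
def IsLorentz (c : ℝ) (B : V4 →ₗ[ℝ] V4) : Prop :=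
  ∀ x y : V4, mink c (B x) (B y) = mink c x y

/-- The standard simultaneity relation determined by a future timelike vector `u`:
`x R_u y ↔ g_c(x - y, u) = 0`. -/
def Rstd (c : ℝ) (u : V4) (x y : V4) : Prop := mink c (x - y) u = 0

/-- The inertial worldline through `p₀` with direction `u`. -/
def line (p₀ u : V4) : Set V4 := {x : V4 | ∃ s : ℝ, x = p₀ + s • u}

theorem mink_add_left (c : ℝ) (x y z : V4) : mink c (x + y) z = mink c x z + mink c y z := by
  simp [mink, Fin.sum_univ_three]; ring

theorem mink_sub_left (c : ℝ) (x y z : V4) : mink c (x - y) z = mink c x z - mink c y z := by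
  simp [mink, Fin.sum_univ_three]; ring

theorem mink_smul_left (c a : ℝ) (x z : V4) : mink c (a • x) z = a * mink c x z := by
  simp [mink, Fin.sum_univ_three]; ring

theorem mink_symm (c : ℝ) (x z : V4) : mink c x z = mink c z x := by
  simp [mink, Fin.sum_univ_three]; ring

/-- Reflection along `u` (time inversion in the rest frame of `u`). -/
def timeRefl (c : ℝ) (u : V4) : V4 →ₗ[ℝ] V4 where
  toFun v := v - (2 * mink c v u / mink c u u) • u
  map_add' x y := by
    rw [mink_add_left, mul_add, add_div, add_smul]; abel
  map_smul' a x := by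
    simp only [mink_smul_left, RingHom.id_apply, smul_sub, smul_smul]
    congr 2; ring

theorem timeRefl_apply (c : ℝ) (u v : V4) :
    timeRefl c u v = v - (2 * mink c v u / mink c u u) • u := rfl

theorem timeRefl_lorentz (c : ℝ) (u : V4) (h : mink c u u ≠ 0) :
    IsLorentz c (timeRefl c u) := by
  intro x y
  rw [timeRefl_apply, timeRefl_apply, mink_sub_left, mink_smul_left, mink_symm c x,
    mink_symm c u (y - _), mink_sub_left, mink_smul_left, mink_sub_left, mink_smul_left,
    mink_symm c u x, mink_symm c y x]
  field_simp
  ring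

/-- Hogarth's variant of Malament's theorem: let `G_M` be the group of affine
bijections `x ↦ B x + b` (`B` any Lorentz transformation — time inversion allowed,
no dilatations) preserving the line `ℓ = p₀ + ℝu`.  Any `G_M`-invariant equivalence
relation each of whose classes meets `ℓ` in exactly one point is the standard
simultaneity `R_u`. -/
theorem hogarth_theorem (c : ℝ) (hc : 0 < c) (u : V4) (hu : FutureTimelike c u)
    (p₀ : V4) (r : V4 → V4 → Prop) (hr : Equivalence r)
    (hinv : ∀ B : V4 →ₗ[ℝ] V4, IsLorentz c B → ∀ b : V4,
      (fun x : V4 => B x + b) '' line p₀ u = line p₀ u →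
      ∀ p q : V4, r p q → r (B p + b) (B q + b))
    (hrep : ∀ x : V4, ∃! p : V4, p ∈ line p₀ u ∧ r x p) :
    ∀ x y : V4, r x y ↔ Rstd c u x y := by
  have h : mink c u u ≠ 0 := hu.1.ne
  have hu0 : u ≠ 0 := by
    rintro rfl
    exact lt_irrefl _ hu.2
  have key : ∀ x : V4, ∀ s : ℝ, r x (p₀ + s • u) → s = mink c (x - p₀) u / mink c u u := by
    intro x t hxt
    set s : ℝ := mink c (x - p₀) u / mink c u u with hs
    have hs' : mink c (x - p₀) u = s * mink c u u := by rw [hs]; field_simp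
    have hT : ∀ a : ℝ, timeRefl c u (a • u) = -(a • u) := by
      intro a
      rw [timeRefl_apply, mink_smul_left]
      have : 2 * (a * mink c u u) / mink c u u = 2 * a := by field_simp
      rw [this]; module
    have hf : ∀ a : ℝ, timeRefl c u (p₀ + a • u) + (p₀ + (2 * s) • u - timeRefl c u p₀)
        = p₀ + (2 * s - a) • u := by
      intro a
      rw [map_add, hT]; module
    have hx : timeRefl c u x + (p₀ + (2 * s) • u - timeRefl c u p₀) = x := by
      have h1 : timeRefl c u (x - p₀) = x - p₀ - (2 * s) • u := by
        rw [timeRefl_apply, hs']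
        congr 2; field_simp
      have h2 : timeRefl c u x = timeRefl c u (x - p₀) + timeRefl c u p₀ := by
        rw [← map_add, sub_add_cancel]
      rw [h2, h1]; abel
    have himg : (fun x : V4 => timeRefl c u x + (p₀ + (2 * s) • u - timeRefl c u p₀)) ''
        line p₀ u = line p₀ u := by
      ext z
      constructor
      · rintro ⟨_, ⟨a, rfl⟩, rfl⟩
        exact ⟨2 * s - a, hf a⟩
      · rintro ⟨a, rfl⟩
        refine ⟨p₀ + (2 * s - a) • u, ⟨_, rfl⟩, ?_⟩
        have := hf (2 * s - a)
        rw [sub_sub_cancel] at this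
        exact this
    have h3 := hinv _ (timeRefl_lorentz c u h) _ himg _ _ hxt
    rw [hx, hf] at h3
    have h4 := (hrep x).unique ⟨⟨t, rfl⟩, hxt⟩ ⟨⟨2 * s - t, rfl⟩, h3⟩
    have h5 := smul_left_injective ℝ hu0 (add_left_cancel h4)
    linarith
  have key2 : ∀ x : V4, r x (p₀ + (mink c (x - p₀) u / mink c u u) • u) := by
    intro x
    obtain ⟨_, ⟨⟨s, rfl⟩, hs⟩, -⟩ := hrep x
    rw [← key x s hs]
    exact hs
  intro x y
  have hR : Rstd c u x y ↔ mink c (x - p₀) u = mink c (y - p₀) u := by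
    unfold Rstd
    rw [mink_sub_left, mink_sub_left, mink_sub_left]
    constructor <;> intro h <;> linarith
  rw [hR]
  constructor
  · intro hxy
    have := key x _ (hr.trans hxy (key2 y))
    field_simp at this
    exact this.symm
  · intro hxy
    have h1 := key2 x
    rw [hxy] at h1
    exact hr.trans h1 (hr.symm (key2 y))
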